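/- arXiv:1704.07674 — 9 statements merged into one kernel-verified Lean document; each statement's English description precedes it below -/
import Mathlib

section
/- Let S⁽ⁱ⁾ and S⁽ʲ⁾ be symmetric positive semidefinite real n×n matrices, let S̄⁽ⁱ⁾ and S̄⁽ʲ⁾ be symmetric positive definite real n×n matrices, let D⁽ⁱ⁾ and D⁽ʲ⁾ be arbitrary real n×n matrices, and let Θ ≥ 1 be a real number. Set M := (D⁽ⁱ⁾)ᵀ S⁽ʲ⁾ D⁽ⁱ⁾ + (D⁽ʲ⁾)ᵀ S⁽ⁱ⁾ D⁽ʲ⁾ and N := S̄⁽ʲ⁾ (S̄⁽ⁱ⁾ + S̄⁽ʲ⁾)⁻¹ S̄⁽ⁱ⁾ (the parallel sum). Suppose v₁, …, vₙ ∈ ℝⁿ satisfy M vₗ = λₗ N vₗ with vₗᵀ N vₘ = δₗₘ, and let d ≤ n with λₗ ≤ Θ for l = 1, …, d. Then for any coefficients c₁, …, cₙ ∈ ℝ, setting w_Δ = Σ_{l=1}^{d} cₗ vₗ and w_Π = Σ_{l=d+1}^{n} cₗ vₗ, one has (w_Δ)ᵀ M w_Δ ≤ Θ (w_Δ + w_Π)ᵀ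 S̄⁽ⁱ⁾ (w_Δ + w_Π). -/
open Matrix Finset

theorem aux_quad {n : ℕ} (M N : Matrix (Fin n) (Fin n) ℝ)
    (v : Fin n → Fin n → ℝ) (lam : Fin n → ℝ)
    (hev : ∀ l, M.mulVec (v l) = lam l • N.mulVec (v l))
    (horth : ∀ l m, v l ⬝ᵥ N.mulVec (v m) = if l = m then 1 else 0)
    (c : Fin n → ℝ) (s : Finset (Fin n)) :
    (∑ l ∈ s, c l • v l) ⬝ᵥ M.mulVec (∑ l ∈ s, c l • v l) = ∑ l ∈ s, c l ^ 2 * lam l := by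
  rw [Matrix.mulVec_sum, sum_dotProduct]
  refine Finset.sum_congr rfl fun l hl => ?_
  rw [dotProduct_sum]
  simp only [Matrix.mulVec_smul, hev, smul_dotProduct, dotProduct_smul, horth, smul_eq_mul]
  rw [Finset.sum_eq_single l]
  · simp; ring
  · intro b _ hb
    simp [hb.symm]
  · intro h; exact absurd hl h

theorem aux_par {n : ℕ} (A B : Matrix (Fin n) (Fin n) ℝ) (hA : A.PosDef) (hB : B.PosDef)
    (w : Fin n → ℝ) :
    w ⬝ᵥ (B * (A + B)⁻¹ * A).mulVec w ≤ w ⬝ᵥ A.mulVec w := by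
  have hAB := hA.add hB
  have hu : IsUnit (A + B).det := (Matrix.isUnit_iff_isUnit_det _).1 hAB.isUnit
  have e : A = Aᴴ * (A + B)⁻¹ * A + B * (A + B)⁻¹ * A := by
    rw [hA.isHermitian.eq, ← add_mul, ← add_mul, Matrix.mul_nonsing_inv _ hu, one_mul]
  have hp := (hAB.inv.posSemidef.conjTranspose_mul_mul_same A).dotProduct_mulVec_nonneg w
  have e2 : w ⬝ᵥ A.mulVec w = w ⬝ᵥ (Aᴴ * (A + B)⁻¹ * A).mulVec w
      + w ⬝ᵥ (B * (A + B)⁻¹ * A).mulVec w := by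
    rw [← dotProduct_add, ← Matrix.add_mulVec, ← e]
  rw [star_trivial] at hp
  linarith

/-- Adaptive BDDC local estimate: with `M := (D⁽ⁱ⁾)ᵀ S⁽ʲ⁾ D⁽ⁱ⁾ + (D⁽ʲ⁾)ᵀ S⁽ⁱ⁾ D⁽ʲ⁾`
and `N` the parallel sum `S̄⁽ⁱ⁾ : S̄⁽ʲ⁾`, and `N`-orthonormal generalized
eigenvectors of the pencil `(M, N)` whose first `d` eigenvalues are at most
`Θ ≥ 1`, one has `(w_Δ)ᵀ M w_Δ ≤ Θ (w_Δ + w_Π)ᵀ S̄⁽ⁱ⁾ (w_Δ + w_Π)`. -/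
theorem adaptive_bddc_local_estimate {n : ℕ}
    (Si Sj : Matrix (Fin n) (Fin n) ℝ) (hSi : Si.PosSemidef) (hSj : Sj.PosSemidef)
    (Sbi Sbj : Matrix (Fin n) (Fin n) ℝ) (hSbi : Sbi.PosDef) (hSbj : Sbj.PosDef)
    (Di Dj : Matrix (Fin n) (Fin n) ℝ) (Θ : ℝ) (hΘ : 1 ≤ Θ)
    (M N : Matrix (Fin n) (Fin n) ℝ)
    (hMdef : M = Diᵀ * Sj * Di + Djᵀ * Si * Dj)
    (hNdef : N = Sbj * (Sbi + Sbj)⁻¹ * Sbi)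
    (v : Fin n → Fin n → ℝ) (lam : Fin n → ℝ)
    (hev : ∀ l, M.mulVec (v l) = lam l • N.mulVec (v l))
    (horth : ∀ l m, v l ⬝ᵥ N.mulVec (v m) = if l = m then 1 else 0)
    (d : ℕ) (hd : d ≤ n)
    (hlam : ∀ l : Fin n, (l : ℕ) < d → lam l ≤ Θ)
    (c : Fin n → ℝ) :
    (∑ l ∈ Finset.univ.filter (fun l : Fin n => (l : ℕ) < d), c l • v l) ⬝ᵥ
        M.mulVec (∑ l ∈ Finset.univ.filter (fun l : Fin n => (l : ℕ) < d), c l • v l) ≤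
      Θ * (((∑ l ∈ Finset.univ.filter (fun l : Fin n => (l : ℕ) < d), c l • v l) +
            (∑ l ∈ Finset.univ.filter (fun l : Fin n => d ≤ (l : ℕ)), c l • v l)) ⬝ᵥ
          Sbi.mulVec ((∑ l ∈ Finset.univ.filter (fun l : Fin n => (l : ℕ) < d), c l • v l) +
            (∑ l ∈ Finset.univ.filter (fun l : Fin n => d ≤ (l : ℕ)), c l • v l))) := by
  have hs : (∑ l ∈ Finset.univ.filter (fun l : Fin n => (l : ℕ) < d), c l • v l) +
      (∑ l ∈ Finset.univ.filter (fun l : Fin n => d ≤ (l : ℕ)), c l • v l) =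
      ∑ l, c l • v l := by
    rw [← Finset.sum_filter_add_sum_filter_not Finset.univ (fun l : Fin n => (l : ℕ) < d)]
    simp only [not_lt]
  rw [hs, aux_quad M N v lam hev horth c]
  have h1 := aux_quad N N v (fun _ => 1) (by simp) horth c Finset.univ
  have h2 := aux_par Sbi Sbj hSbi hSbj (∑ l, c l • v l)
  rw [← hNdef, h1] at h2
  refine le_trans ?_ (mul_le_mul_of_nonneg_left h2 (by linarith))
  rw [Finset.mul_sum]
  refine le_trans (Finset.sum_le_sum (g := fun l => Θ * (c l ^ 2 * 1)) fun l hl => ?_)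
    (Finset.sum_le_sum_of_subset_of_nonneg (Finset.filter_subset _ _) fun l _ _ => ?_)
  · have := mul_le_mul_of_nonneg_left (hlam l (Finset.mem_filter.1 hl).2) (sq_nonneg (c l))
    linarith
  · have : 0 ≤ Θ := by linarith
    positivity
end

section
/- Let S be a symmetric positive definite real n×n matrix and let E₁, …, E_N be real n×nᵢ matrices, each of full column rank, satisfying the cross-orthogonality condition Eᵢᵀ S Eⱼ = 0 for all i ≠ j. Define S_Δ⁻ := Σ_{i=1}^{N} Eᵢ (Eᵢᵀ S Eᵢ)⁻¹ Eᵢᵀ. Then for any vectors gᵢ ∈ ℝ^{nᵢ} (i = 1, …, N), one has S_Δ⁻ S (Σ_{i=1}^{N} Eᵢ gᵢ) = Σ_{i=1}^{N} Eᵢ gᵢ; that is, S_Δ⁻ S acts as the identity on the sum of the column spaces of the Eᵢ. -/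
open Matrix Finset

/-- Let `S` be symmetric positive definite and `E i` full-column-rank matrices
with cross-orthogonality `Eᵢᵀ S Eⱼ = 0` for `i ≠ j`.  Then
`S_Δ⁻ S := (∑ i, Eᵢ (Eᵢᵀ S Eᵢ)⁻¹ Eᵢᵀ) S` acts as the identity on the sum of
the column spaces of the `Eᵢ`. -/
theorem sDelta_inv_mul_S_id {n N : ℕ} (S : Matrix (Fin n) (Fin n) ℝ)
    (hS : S.PosDef) (ni : Fin N → ℕ)
    (E : ∀ i : Fin N, Matrix (Fin n) (Fin (ni i)) ℝ)
    (hrank : ∀ i, Function.Injective (E i).mulVec)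
    (horth : ∀ i j, i ≠ j → (E i)ᵀ * S * E j = 0)
    (g : ∀ i : Fin N, Fin (ni i) → ℝ) :
    ((∑ i, E i * ((E i)ᵀ * S * E i)⁻¹ * (E i)ᵀ) * S).mulVec
        (∑ i, (E i).mulVec (g i)) = ∑ i, (E i).mulVec (g i) := by
  have hu : ∀ i, IsUnit ((E i)ᵀ * S * E i).det := by
    intro i
    have h := hS.conjTranspose_mul_mul_same (hrank i)
    rw [conjTranspose_eq_transpose_of_trivial] at h
    exact h.det_pos.ne'.isUnit
  rw [mulVec_sum]
  refine Finset.sum_congr rfl fun j _ => ?_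
  rw [mulVec_mulVec]
  congr 1
  rw [Matrix.sum_mul, Matrix.sum_mul, Finset.sum_eq_single j]
  · have h : E j * ((E j)ᵀ * S * E j)⁻¹ * (E j)ᵀ * S * E j
        = E j * (((E j)ᵀ * S * E j)⁻¹ * ((E j)ᵀ * S * E j)) := by
      simp only [Matrix.mul_assoc]
    rw [h, nonsing_inv_mul _ (hu j), Matrix.mul_one]
  · intro i _ hij
    have h : E i * ((E i)ᵀ * S * E i)⁻¹ * (E i)ᵀ * S * E j
        = E i * (((E i)ᵀ * S * E i)⁻¹ * ((E i)ᵀ * S * E j)) := by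
      simp only [Matrix.mul_assoc]
    rw [h, horth i j hij, Matrix.mul_zero, Matrix.mul_zero]
  · intro h
    exact absurd (Finset.mem_univ j) h
end

section
/- Let S be a symmetric positive definite real n×n matrix and let E₁, …, E_N be real n×nᵢ matrices, each of full column rank, satisfying Eᵢᵀ S Eⱼ = 0 for all i ≠ j. Define S_Δ⁻ := Σ_{i=1}^{N} Eᵢ (Eᵢᵀ S Eᵢ)⁻¹ Eᵢᵀ. Then the matrix S_Δ⁻ S is idempotent: (S_Δ⁻ S)² = S_Δ⁻ S. -/
open Matrix Finset

/-- Let `S` be symmetric positive definite and `E i` full-column-rank matrices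
with cross-orthogonality `Eᵢᵀ S Eⱼ = 0` for `i ≠ j`.  Then with
`S_Δ⁻ := ∑ i, Eᵢ (Eᵢᵀ S Eᵢ)⁻¹ Eᵢᵀ`, the matrix `S_Δ⁻ S` is idempotent. -/
theorem sDelta_inv_mul_S_idempotent {n N : ℕ} (S : Matrix (Fin n) (Fin n) ℝ)
    (hS : S.PosDef) (ni : Fin N → ℕ)
    (E : ∀ i : Fin N, Matrix (Fin n) (Fin (ni i)) ℝ)
    (hrank : ∀ i, Function.Injective (E i).mulVec)
    (horth : ∀ i j, i ≠ j → (E i)ᵀ * S * E j = 0) :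
    ((∑ i, E i * ((E i)ᵀ * S * E i)⁻¹ * (E i)ᵀ) * S) *
        ((∑ i, E i * ((E i)ᵀ * S * E i)⁻¹ * (E i)ᵀ) * S) =
      (∑ i, E i * ((E i)ᵀ * S * E i)⁻¹ * (E i)ᵀ) * S := by
  have hunit : ∀ i, IsUnit ((E i)ᵀ * S * E i).det := by
    intro i
    have h := hS.conjTranspose_mul_mul_same (hrank i)
    rw [conjTranspose_eq_transpose_of_trivial] at h
    exact h.det_pos.ne'.isUnit
  rw [← Matrix.mul_assoc]
  congr 1
  rw [Finset.sum_mul, Finset.sum_mul]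
  refine Finset.sum_congr rfl fun i _ => ?_
  rw [Finset.mul_sum, Finset.sum_eq_single i]
  · have h : E i * ((E i)ᵀ * S * E i)⁻¹ * (E i)ᵀ * S * (E i * ((E i)ᵀ * S * E i)⁻¹ * (E i)ᵀ)
        = E i * (((E i)ᵀ * S * E i)⁻¹ * ((E i)ᵀ * S * E i)) * ((E i)ᵀ * S * E i)⁻¹ * (E i)ᵀ := by
      generalize ((E i)ᵀ * S * E i)⁻¹ = M
      simp only [Matrix.mul_assoc]
    rw [h, Matrix.nonsing_inv_mul _ (hunit i), Matrix.mul_one]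
  · intro j _ hj
    have h : E i * ((E i)ᵀ * S * E i)⁻¹ * (E i)ᵀ * S * (E j * ((E j)ᵀ * S * E j)⁻¹ * (E j)ᵀ)
        = E i * ((E i)ᵀ * S * E i)⁻¹ * ((E i)ᵀ * S * E j) * ((E j)ᵀ * S * E j)⁻¹ * (E j)ᵀ := by
      generalize ((E i)ᵀ * S * E i)⁻¹ = M
      generalize ((E j)ᵀ * S * E j)⁻¹ = M'
      simp only [Matrix.mul_assoc]
    rw [h, horth i j hj.symm]
    simp
  · intro h
    exact absurd (Finset.mem_univ i) h
end

section
/- Let S be a symmetric positive definite real n×n matrix, let E₁, …, E_N be real n×nᵢ matrices and E_Π a real n×p matrix such that the n×n matrix obtained by concatenating the columns of E₁, …, E_N, E_Π is invertible (so n = n₁ + ⋯ + n_N + p and the column spaces form a direct-sum decomposition of ℝⁿ), and assume Eᵢᵀ S Eⱼ = 0 for all i ≠ j. Define S_Δ⁻ := Σ_{i=1}^{N} Eᵢ (Eᵢᵀ S Eᵢ)⁻¹ Eᵢᵀ and R_Π := E_Π − S_Δ⁻ S E_Π. Then R_Π has full column rank and F := R_Πᵀ S R_Π is a symmetric positive definite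 p×p matrix. -/
open Matrix Finset

/-- Let `S` be symmetric positive definite, `E i` (`i = 1, …, N`) and `E_Π`
matrices whose columns, concatenated, form an invertible `n × n` matrix (the
concatenated matrix is encoded as a matrix indexed by `(Σ i, Fin (ni i)) ⊕ Fin p`,
and its invertibility as the bijectivity of the associated linear map), with
`Eᵢᵀ S Eⱼ = 0` for `i ≠ j`.  Then `R_Π := E_Π - S_Δ⁻ S E_Π` has full column rank
and `F := R_Πᵀ S R_Π` is symmetric positive definite. -/
theorem rPi_full_rank_and_F_posDef {n N p : ℕ} (S : Matrix (Fin n) (Fin n) ℝ)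
    (hS : S.PosDef) (ni : Fin N → ℕ)
    (E : ∀ i : Fin N, Matrix (Fin n) (Fin (ni i)) ℝ)
    (EPi : Matrix (Fin n) (Fin p) ℝ)
    (C : Matrix (Fin n) ((Σ i : Fin N, Fin (ni i)) ⊕ Fin p) ℝ)
    (hC : C = Matrix.of fun r j =>
      Sum.elim (fun s : Σ i : Fin N, Fin (ni i) => E s.1 r s.2) (fun k => EPi r k) j)
    (hCinv : Function.Bijective C.mulVec)
    (horth : ∀ i j, i ≠ j → (E i)ᵀ * S * E j = 0)
    (SDelta RPi : _)
    (hSDelta : SDelta = ∑ i, E i * ((E i)ᵀ * S * E i)⁻¹ * (E i)ᵀ)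
    (hRPi : RPi = EPi - SDelta * S * EPi) :
    Function.Injective RPi.mulVec ∧ (RPiᵀ * S * RPi).PosDef := by
  have key : ∀ x, RPi.mulVec x = C.mulVec (Sum.elim
      (fun s : Σ i : Fin N, Fin (ni i) =>
        -((((E s.1)ᵀ * S * E s.1)⁻¹ * (E s.1)ᵀ * S * EPi).mulVec x s.2)) x) := by
    intro x
    have h1 : RPi.mulVec x = EPi.mulVec x
        - ∑ i, (E i).mulVec ((((E i)ᵀ * S * E i)⁻¹ * (E i)ᵀ * S * EPi).mulVec x) := by
      rw [hRPi, hSDelta, Matrix.sub_mulVec, Matrix.sum_mul, Matrix.sum_mul, Matrix.sum_mulVec]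
      simp only [Matrix.mulVec_mulVec, Matrix.mul_assoc]
    rw [h1, hC]
    ext r
    simp only [Pi.sub_apply, Finset.sum_apply]
    simp only [Matrix.mulVec, dotProduct, Fintype.sum_sum_type, Fintype.sum_sigma,
      Matrix.of_apply, Sum.elim_inl, Sum.elim_inr, mul_neg, Finset.sum_neg_distrib]
    ring
  have hinj : Function.Injective RPi.mulVec := by
    intro x y hxy
    rw [key, key] at hxy
    have h := hCinv.1 hxy
    ext k
    exact congrFun h (Sum.inr k)
  refine ⟨hinj, ?_⟩
  have h := hS.conjTranspose_mul_mul_same hinj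
  rwa [Matrix.conjTranspose_eq_transpose_of_trivial] at h
end

section
/- Let S be a symmetric positive definite real n×n matrix, let E₁, …, E_N be real n×nᵢ matrices and E_Π a real n×p matrix such that the n×n matrix obtained by concatenating the columns of E₁, …, E_N, E_Π is invertible, and assume Eᵢᵀ S Eⱼ = 0 for all i ≠ j. Define S_Δ⁻ := Σ_{i=1}^{N} Eᵢ (Eᵢᵀ S Eᵢ)⁻¹ Eᵢᵀ and F := E_Πᵀ S E_Π − E_Πᵀ S S_Δ⁻ S E_Π, and assume F is invertible. Then S⁻¹ = S_Δ⁻ + S_Δ⁻ S E_Π F⁻¹ E_Πᵀ S S_Δ⁻ − S_Δ⁻ S E_Π F⁻¹ E_Πᵀ − E_Π F⁻¹ E_Πᵀ S S_Δ⁻ + E_Π F⁻¹ E_Πᵀ. -/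
open Matrix Finset

/-- Explicit formula for `S⁻¹` in terms of `S_Δ⁻`, `E_Π` and
`F := E_Πᵀ S E_Π - E_Πᵀ S S_Δ⁻ S E_Π` (assumed invertible), under the
direct-sum decomposition given by the columns of `E₁, …, E_N, E_Π` and the
cross-orthogonality `Eᵢᵀ S Eⱼ = 0` for `i ≠ j`. -/
theorem inverse_S_formula {n N p : ℕ} (S : Matrix (Fin n) (Fin n) ℝ)
    (hS : S.PosDef) (ni : Fin N → ℕ)
    (E : ∀ i : Fin N, Matrix (Fin n) (Fin (ni i)) ℝ)
    (EPi : Matrix (Fin n) (Fin p) ℝ)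
    (C : Matrix (Fin n) ((Σ i : Fin N, Fin (ni i)) ⊕ Fin p) ℝ)
    (hC : C = Matrix.of fun r j =>
      Sum.elim (fun s : Σ i : Fin N, Fin (ni i) => E s.1 r s.2) (fun k => EPi r k) j)
    (hCinv : Function.Bijective C.mulVec)
    (horth : ∀ i j, i ≠ j → (E i)ᵀ * S * E j = 0)
    (SDelta F : _)
    (hSDelta : SDelta = ∑ i, E i * ((E i)ᵀ * S * E i)⁻¹ * (E i)ᵀ)
    (hF : F = EPiᵀ * S * EPi - EPiᵀ * S * SDelta * S * EPi)
    (hFinv : IsUnit F) :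
    S⁻¹ = SDelta + SDelta * S * EPi * F⁻¹ * EPiᵀ * S * SDelta
        - SDelta * S * EPi * F⁻¹ * EPiᵀ
        - EPi * F⁻¹ * EPiᵀ * S * SDelta
        + EPi * F⁻¹ * EPiᵀ := by
  have hinj : ∀ i, Function.Injective (E i).mulVec := by
    intro i
    have h1 := Matrix.mulVec_injective_iff.1 hCinv.1
    rw [Matrix.mulVec_injective_iff]
    have h2 := h1.comp (fun k : Fin (ni i) => Sum.inl (⟨i, k⟩ : Σ i : Fin N, Fin (ni i)))
      (by
        intro a b hab
        simpa using hab)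
    convert h2 using 1
    ext k r
    rw [hC]
    rfl
  have hpd : ∀ i, IsUnit ((E i)ᵀ * S * E i).det := by
    intro i
    have h := hS.conjTranspose_mul_mul_same (hinj i)
    rw [Matrix.conjTranspose_eq_transpose_of_trivial] at h
    exact (Matrix.isUnit_iff_isUnit_det _).1 h.isUnit
  have hD : ∀ j, SDelta * (S * E j) = E j := by
    intro j
    rw [hSDelta, Matrix.sum_mul, Finset.sum_eq_single j]
    · rw [Matrix.mul_assoc (E j * _), ← Matrix.mul_assoc (E j)ᵀ, Matrix.mul_assoc (E j),
        Matrix.nonsing_inv_mul _ (hpd j), Matrix.mul_one]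
    · intro i _ hij
      rw [Matrix.mul_assoc (E i * _), ← Matrix.mul_assoc (E i)ᵀ, horth i j hij, Matrix.mul_zero]
    · simp
  have hFF : F⁻¹ * F = 1 := Matrix.nonsing_inv_mul _ ((Matrix.isUnit_iff_isUnit_det _).1 hFinv)
  have hX : SDelta + SDelta * S * EPi * F⁻¹ * EPiᵀ * S * SDelta
        - SDelta * S * EPi * F⁻¹ * EPiᵀ
        - EPi * F⁻¹ * EPiᵀ * S * SDelta
        + EPi * F⁻¹ * EPiᵀ
      = SDelta + (EPi - SDelta * S * EPi) * (F⁻¹ * (EPiᵀ - EPiᵀ * S * SDelta)) := by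
    simp only [Matrix.mul_sub, Matrix.sub_mul, Matrix.mul_assoc]
    abel
  rw [hX]
  apply Matrix.inv_eq_left_inv
  generalize hY : (SDelta + (EPi - SDelta * S * EPi) * (F⁻¹ * (EPiᵀ - EPiᵀ * S * SDelta))) * S = Y
  have hE : ∀ j, Y * E j = E j := by
    intro j
    have h0 : (EPiᵀ - EPiᵀ * S * SDelta) * (S * E j) = 0 := by
      rw [Matrix.sub_mul, Matrix.mul_assoc (EPiᵀ * S), hD, Matrix.mul_assoc, sub_self]
    rw [← hY, Matrix.mul_assoc, Matrix.add_mul, hD, Matrix.mul_assoc, Matrix.mul_assoc, Matrix.mul_assoc F⁻¹, h0]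
    simp
  have hP : Y * EPi = EPi := by
    have h0 : (EPiᵀ - EPiᵀ * S * SDelta) * (S * EPi) = F := by
      rw [hF]
      simp only [Matrix.sub_mul, Matrix.mul_assoc]
    rw [← hY, Matrix.mul_assoc, Matrix.add_mul, Matrix.mul_assoc, Matrix.mul_assoc, Matrix.mul_assoc F⁻¹, h0, hFF,
      Matrix.mul_one]
    abel
  have hYC : Y * C = C := by
    ext r c
    rcases c with ⟨i, k⟩ | k
    · have := congrFun (congrFun (hE i) r) k
      simpa [hC, Matrix.mul_apply] using this
    · have := congrFun (congrFun hP r) k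
      simpa [hC, Matrix.mul_apply] using this
  apply Matrix.mulVec_injective
  funext w
  obtain ⟨v, rfl⟩ := hCinv.2 w
  rw [Matrix.mulVec_mulVec, hYC, Matrix.one_mulVec]
end

section
/- Let S be a symmetric positive definite real n×n matrix, let E₁, …, E_N be real n×nᵢ matrices and E_Π a real n×p matrix such that the concatenation of their columns forms an invertible n×n matrix, with Eᵢᵀ S Eⱼ = 0 for all i ≠ j. Let R₁, …, R_N (of sizes nᵢ×n) and R_Π (of size p×n) be the unique matrices satisfying Rᵢ Eⱼ = δᵢⱼ I, Rᵢ E_Π = 0, R_Π Eᵢ = 0, and R_Π E_Π = I (the dual projections onto the direct summands). Let Q₁, …, Q_N be arbitrary real m×nᵢ matrices and Ê_Π an arbitrary real m×p matrix. Define S_Δ⁻ := Σ_{i=1}^{N} Eᵢ (Eᵢᵀ S Eᵢ)⁻¹ Eᵢᵀ, F := E_Πᵀ S E_Π − E_Πᵀ S S_Δ⁻ S E_Π (assumed invertible), R₀ := Ê_Πᵀ − Σ_{i=1}^{N} E_Πᵀ S Eᵢ (Eᵢᵀ S Eᵢ)⁻¹ Qᵢᵀ, and E_D := Σ_{i=1}^{N}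 Qᵢ Rᵢ + Ê_Π R_Π. Then E_D S⁻¹ E_Dᵀ = Σ_{i=1}^{N} Qᵢ (Eᵢᵀ S Eᵢ)⁻¹ Qᵢᵀ + R₀ᵀ F⁻¹ R₀. -/
open Matrix Finset

/-- Concise form of the BDDC preconditioner:
`E_D S⁻¹ E_Dᵀ = ∑ i, Qᵢ (Eᵢᵀ S Eᵢ)⁻¹ Qᵢᵀ + R₀ᵀ F⁻¹ R₀`, where
`E_D = ∑ i, Qᵢ Rᵢ + Ê_Π R_Π`,
`R₀ = Ê_Πᵀ - ∑ i, E_Πᵀ S Eᵢ (Eᵢᵀ S Eᵢ)⁻¹ Qᵢᵀ`, and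
`F = E_Πᵀ S E_Π - E_Πᵀ S S_Δ⁻ S E_Π` (assumed invertible), under the
direct-sum decomposition given by the columns of `E₁, …, E_N, E_Π`, the
cross-orthogonality `Eᵢᵀ S Eⱼ = 0` for `i ≠ j`, and the dual projections
`Rᵢ, R_Π`. -/
theorem bddc_preconditioner_concise_form {n N p m : ℕ}
    (S : Matrix (Fin n) (Fin n) ℝ) (hS : S.PosDef) (ni : Fin N → ℕ)
    (E : ∀ i : Fin N, Matrix (Fin n) (Fin (ni i)) ℝ)
    (EPi : Matrix (Fin n) (Fin p) ℝ)
    (C : Matrix (Fin n) ((Σ i : Fin N, Fin (ni i)) ⊕ Fin p) ℝ)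
    (hC : C = Matrix.of fun r j =>
      Sum.elim (fun s : Σ i : Fin N, Fin (ni i) => E s.1 r s.2) (fun k => EPi r k) j)
    (hCinv : Function.Bijective C.mulVec)
    (horth : ∀ i j, i ≠ j → (E i)ᵀ * S * E j = 0)
    (R : ∀ i : Fin N, Matrix (Fin (ni i)) (Fin n) ℝ)
    (RPi : Matrix (Fin p) (Fin n) ℝ)
    (hRE : ∀ i, R i * E i = 1)
    (hRE' : ∀ i j, i ≠ j → R i * E j = 0)
    (hREPi : ∀ i, R i * EPi = 0)
    (hRPiE : ∀ i, RPi * E i = 0)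
    (hRPiEPi : RPi * EPi = 1)
    (Q : ∀ i : Fin N, Matrix (Fin m) (Fin (ni i)) ℝ)
    (EhatPi : Matrix (Fin m) (Fin p) ℝ)
    (SDelta F R0 ED : _)
    (hSDelta : SDelta = ∑ i, E i * ((E i)ᵀ * S * E i)⁻¹ * (E i)ᵀ)
    (hF : F = EPiᵀ * S * EPi - EPiᵀ * S * SDelta * S * EPi)
    (hFinv : IsUnit F)
    (hR0 : R0 = EhatPiᵀ - ∑ i, EPiᵀ * S * E i * ((E i)ᵀ * S * E i)⁻¹ * (Q i)ᵀ)
    (hED : ED = (∑ i, Q i * R i) + EhatPi * RPi) :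
    ED * S⁻¹ * EDᵀ =
      (∑ i, Q i * ((E i)ᵀ * S * E i)⁻¹ * (Q i)ᵀ) + R0ᵀ * F⁻¹ * R0 := by
  have hSt : Sᵀ = S := by
    have h := hS.isHermitian.eq
    rwa [Matrix.conjTranspose_eq_transpose_of_trivial] at h
  have hK : ∀ i, IsUnit ((E i)ᵀ * S * E i).det := by
    intro i
    have hinj : Function.Injective (E i).mulVec := by
      intro x y hxy
      have h := congrArg (R i).mulVec hxy
      simpa [Matrix.mulVec_mulVec, hRE i] using h
    have h := hS.conjTranspose_mul_mul_same hinj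
    rw [Matrix.conjTranspose_eq_transpose_of_trivial] at h
    exact (Matrix.isUnit_iff_isUnit_det _).1 h.isUnit
  have hKt : ∀ i, (((E i)ᵀ * S * E i)⁻¹)ᵀ = ((E i)ᵀ * S * E i)⁻¹ := by
    intro i
    rw [Matrix.transpose_nonsing_inv]
    simp [Matrix.transpose_mul, hSt, Matrix.mul_assoc]
  have hGt : SDeltaᵀ = SDelta := by
    rw [hSDelta, Matrix.transpose_sum]
    refine Finset.sum_congr rfl fun i _ => ?_
    rw [Matrix.transpose_mul, Matrix.transpose_mul, hKt, Matrix.transpose_transpose]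
    simp only [Matrix.mul_assoc]
  have hGE : ∀ j, SDelta * (S * E j) = E j := by
    intro j
    rw [hSDelta, Matrix.sum_mul, Finset.sum_eq_single j]
    · rw [Matrix.mul_assoc, ← Matrix.mul_assoc (E j)ᵀ, Matrix.mul_assoc,
        Matrix.nonsing_inv_mul _ (hK j), Matrix.mul_one]
    · intro i _ hij
      rw [Matrix.mul_assoc, ← Matrix.mul_assoc (E i)ᵀ, horth i j hij, Matrix.mul_zero]
    · simp
  have hFd : IsUnit F.det := (Matrix.isUnit_iff_isUnit_det _).1 hFinv
  obtain ⟨W, hW⟩ : ∃ W, W = EPi - SDelta * (S * EPi) := ⟨_, rfl⟩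
  have hWt : Wᵀ = EPiᵀ - EPiᵀ * S * SDelta := by
    rw [hW]
    simp [Matrix.transpose_mul, hSt, hGt, Matrix.mul_assoc]
  have hWE : ∀ i, Wᵀ * (S * E i) = 0 := by
    intro i
    rw [hWt, Matrix.sub_mul, Matrix.mul_assoc (EPiᵀ * S), hGE, Matrix.mul_assoc, sub_self]
  have hWP : Wᵀ * (S * EPi) = F := by
    rw [hWt, Matrix.sub_mul, hF]
    simp only [Matrix.mul_assoc]
  obtain ⟨X, hX⟩ : ∃ X, X = (SDelta + W * F⁻¹ * Wᵀ) * S := ⟨_, rfl⟩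
  have hXE : ∀ i, X * E i = E i := by
    intro i
    rw [hX, Matrix.mul_assoc, Matrix.add_mul, hGE, Matrix.mul_assoc, hWE, Matrix.mul_zero,
      add_zero]
  have hXP : X * EPi = EPi := by
    rw [hX, Matrix.mul_assoc, Matrix.add_mul, Matrix.mul_assoc (W * F⁻¹), hWP,
      Matrix.mul_assoc, Matrix.nonsing_inv_mul _ hFd, Matrix.mul_one, hW]
    abel
  have hXC : X * C = C := by
    ext r j
    rcases j with ⟨i, k⟩ | k
    · have h := congrFun (congrFun (hXE i) r) k
      simpa [hC, Matrix.mul_apply] using h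
    · have h := congrFun (congrFun hXP r) k
      simpa [hC, Matrix.mul_apply] using h
  have hX1 : X = 1 := by
    apply Matrix.mulVec_injective
    funext v
    obtain ⟨w, rfl⟩ := hCinv.2 v
    rw [Matrix.mulVec_mulVec, hXC, Matrix.one_mulVec]
  have hSinv : S⁻¹ = SDelta + W * F⁻¹ * Wᵀ :=
    Matrix.inv_eq_left_inv (hX ▸ hX1)
  have hDE : ∀ j, ED * E j = Q j := by
    intro j
    rw [hED, Matrix.add_mul, Matrix.mul_assoc, hRPiE, Matrix.mul_zero, add_zero,
      Matrix.sum_mul, Finset.sum_eq_single j]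
    · rw [Matrix.mul_assoc, hRE, Matrix.mul_one]
    · intro i _ hij
      rw [Matrix.mul_assoc, hRE' i j hij, Matrix.mul_zero]
    · simp
  have hDP : ED * EPi = EhatPi := by
    rw [hED, Matrix.add_mul, Matrix.mul_assoc, hRPiEPi, Matrix.mul_one, Matrix.sum_mul]
    simp [Matrix.mul_assoc, hREPi]
  have hDW : ED * W = R0ᵀ := by
    rw [hW, Matrix.mul_sub, hDP, hR0, Matrix.transpose_sub, Matrix.transpose_transpose,
      Matrix.transpose_sum, hSDelta, Matrix.sum_mul, Matrix.mul_sum]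
    congr 1
    refine Finset.sum_congr rfl fun i _ => ?_
    simp only [Matrix.transpose_mul, hKt, Matrix.transpose_transpose, hSt]
    rw [← hDE i]
    simp only [Matrix.mul_assoc]
  have hDWt : Wᵀ * EDᵀ = R0 := by
    rw [← Matrix.transpose_mul, hDW, Matrix.transpose_transpose]
  have h2 : ED * (W * F⁻¹ * Wᵀ) * EDᵀ = R0ᵀ * F⁻¹ * R0 := by
    rw [← hDW, ← hDWt]
    simp only [Matrix.mul_assoc]
  rw [hSinv, Matrix.mul_add, Matrix.add_mul, h2]
  congr 1
  rw [hSDelta, Matrix.mul_sum, Matrix.sum_mul]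
  refine Finset.sum_congr rfl fun i _ => ?_
  rw [← hDE i, Matrix.transpose_mul]
  simp only [Matrix.mul_assoc]
end

section
/- Let S̃ be a symmetric positive definite real n×n matrix, let R be a real n×m matrix of full column rank, and let E be a real m×n matrix satisfying E R = I_m. Define Ŝ := Rᵀ S̃ R and M⁻¹ := E S̃⁻¹ Eᵀ. Then every eigenvalue of the preconditioned matrix M⁻¹ Ŝ = E S̃⁻¹ Eᵀ Rᵀ S̃ R is real and greater than or equal to 1; that is, if v ∈ ℝᵐ is nonzero and (E S̃⁻¹ Eᵀ)(Rᵀ S̃ R) v = μ v for some μ ∈ ℝ, then μ ≥ 1. -/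
open Matrix

/-- Lower eigenvalue bound for the BDDC-preconditioned operator: if
`S̃` is symmetric positive definite, `R` has full column rank, `E R = I`, and
`μ` is a real eigenvalue of `(E S̃⁻¹ Eᵀ)(Rᵀ S̃ R)`, then `μ ≥ 1`. -/
theorem bddc_min_eigenvalue {n m : ℕ}
    (St : Matrix (Fin n) (Fin n) ℝ) (hSt : St.PosDef)
    (R : Matrix (Fin n) (Fin m) ℝ) (hR : Function.Injective R.mulVec)
    (E : Matrix (Fin m) (Fin n) ℝ) (hER : E * R = 1)
    (μ : ℝ) (v : Fin m → ℝ) (hv : v ≠ 0)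
    (heig : ((E * St⁻¹ * Eᵀ) * (Rᵀ * St * R)).mulVec v = μ • v) :
    1 ≤ μ := by
  have hSym : Stᵀ = St := by
    have := hSt.isHermitian.eq
    rwa [conjTranspose_eq_transpose_of_trivial] at this
  have hdet : IsUnit St.det := hSt.det_pos.ne'.isUnit
  have hinvT : (St⁻¹)ᵀ = St⁻¹ := by rw [transpose_nonsing_inv, hSym]
  have hRE : Rᵀ * Eᵀ = 1 := by rw [← transpose_mul, hER, transpose_one]
  have hpos : 0 < v ⬝ᵥ ((Rᵀ * St * R) *ᵥ v) := by
    have hu : R *ᵥ v ≠ 0 := by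
      intro h
      exact hv (hR (by simpa using h))
    have h := hSt.dotProduct_mulVec_pos hu
    simpa [← mulVec_mulVec, dotProduct_mulVec, vecMul_transpose] using h
  obtain ⟨A, hA⟩ : ∃ A, A = Rᵀ * St * R := ⟨_, rfl⟩
  have hAT : Aᵀ = A := by
    rw [hA]
    simp [transpose_mul, hSym, Matrix.mul_assoc]
  rw [← hA] at heig hpos
  have key : (St⁻¹ * Eᵀ * A - R)ᵀ * St * (St⁻¹ * Eᵀ * A - R)
      = A * (E * St⁻¹ * Eᵀ * A) - A := by
    have h1 : St * (St⁻¹ * Eᵀ * A - R) = Eᵀ * A - St * R := by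
      rw [Matrix.mul_sub, Matrix.mul_assoc St⁻¹, mul_nonsing_inv_cancel_left _ _ hdet]
    have h2 : (St⁻¹ * Eᵀ * A - R)ᵀ = A * E * St⁻¹ - Rᵀ := by
      simp [transpose_sub, transpose_mul, hinvT, hAT, Matrix.mul_assoc]
    have h3 : A * E * St⁻¹ * (St * R) = A := by
      rw [Matrix.mul_assoc, nonsing_inv_mul_cancel_left _ _ hdet, Matrix.mul_assoc, hER,
        Matrix.mul_one]
    have h4 : Rᵀ * (Eᵀ * A) = A := by rw [← Matrix.mul_assoc, hRE, Matrix.one_mul]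
    have h5 : Rᵀ * (St * R) = A := by rw [hA, Matrix.mul_assoc]
    rw [Matrix.mul_assoc, h1, h2, Matrix.sub_mul, Matrix.mul_sub, Matrix.mul_sub, h3, h4, h5]
    simp [Matrix.mul_assoc]
  have hnn := hSt.posSemidef.dotProduct_mulVec_nonneg ((St⁻¹ * Eᵀ * A - R) *ᵥ v)
  have heq : star ((St⁻¹ * Eᵀ * A - R) *ᵥ v) ⬝ᵥ (St *ᵥ ((St⁻¹ * Eᵀ * A - R) *ᵥ v))
      = v ⬝ᵥ (((St⁻¹ * Eᵀ * A - R)ᵀ * St * (St⁻¹ * Eᵀ * A - R)) *ᵥ v) := by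
    generalize St⁻¹ * Eᵀ * A - R = T
    simp [← mulVec_mulVec, dotProduct_mulVec, vecMul_transpose]
  rw [heq, key, sub_mulVec, ← mulVec_mulVec, heig, mulVec_smul, dotProduct_sub,
    dotProduct_smul, smul_eq_mul] at hnn
  by_contra hlt
  push Not at hlt
  nlinarith
end

section
/- Let S̃ be a symmetric positive definite real n×n matrix, let R be a real n×m matrix of full column rank, let E be a real m×n matrix with E R = I_m, and let P := I_n − R E. Suppose K ≥ 1 is a real number such that (P w)ᵀ S̃ (P w) ≤ K · wᵀ S̃ w for all w ∈ ℝⁿ. Then every real eigenvalue μ of the preconditioned matrix Ĝ := (E S̃⁻¹ Eᵀ)(Rᵀ S̃ R) satisfies 1 ≤ μ ≤ K; in particular, for any two real eigenvalues μ₁, μ₂ of Ĝ one has μ₂/μ₁ ≤ K, so the condition number of Ĝ is bounded by K. -/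
open Matrix

/-- Condition number bound for the BDDC-preconditioned operator: if the jump
operator `P := I - R E` satisfies `(P w)ᵀ S̃ (P w) ≤ K wᵀ S̃ w` for all `w`
(`K ≥ 1`), then every real eigenvalue `μ` of `Ĝ := (E S̃⁻¹ Eᵀ)(Rᵀ S̃ R)`
satisfies `1 ≤ μ ≤ K`; in particular the ratio of any two real eigenvalues is
at most `K`, so the condition number of `Ĝ` is bounded by `K`. -/
theorem bddc_condition_number_bound {n m : ℕ}
    (St : Matrix (Fin n) (Fin n) ℝ) (hSt : St.PosDef)
    (R : Matrix (Fin n) (Fin m) ℝ) (hR : Function.Injective R.mulVec)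
    (E : Matrix (Fin m) (Fin n) ℝ) (hER : E * R = 1)
    (P : Matrix (Fin n) (Fin n) ℝ) (hP : P = 1 - R * E)
    (K : ℝ) (hK : 1 ≤ K)
    (hPbound : ∀ w : Fin n → ℝ,
      P.mulVec w ⬝ᵥ St.mulVec (P.mulVec w) ≤ K * (w ⬝ᵥ St.mulVec w)) :
    (∀ (μ : ℝ) (v : Fin m → ℝ), v ≠ 0 →
        ((E * St⁻¹ * Eᵀ) * (Rᵀ * St * R)).mulVec v = μ • v → 1 ≤ μ ∧ μ ≤ K) ∧
      (∀ (μ₁ μ₂ : ℝ) (v₁ v₂ : Fin m → ℝ), v₁ ≠ 0 → v₂ ≠ 0 →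
        ((E * St⁻¹ * Eᵀ) * (Rᵀ * St * R)).mulVec v₁ = μ₁ • v₁ →
        ((E * St⁻¹ * Eᵀ) * (Rᵀ * St * R)).mulVec v₂ = μ₂ • v₂ →
        μ₂ / μ₁ ≤ K) := by
  have key : ∀ (μ : ℝ) (v : Fin m → ℝ), v ≠ 0 →
        ((E * St⁻¹ * Eᵀ) * (Rᵀ * St * R)).mulVec v = μ • v → 1 ≤ μ ∧ μ ≤ K := by
    intro μ v hv hev
    have hdet : IsUnit St.det := hSt.det_pos.ne'.isUnit
    have hsymm : Stᵀ = St := by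
      have h := hSt.isHermitian.eq
      rwa [conjTranspose_eq_transpose_of_trivial] at h
    have comm : ∀ x y : Fin n → ℝ, x ⬝ᵥ St *ᵥ y = y ⬝ᵥ St *ᵥ x := by
      intro x y
      rw [dotProduct_mulVec, ← mulVec_transpose, hsymm, dotProduct_comm]
    have nonneg : ∀ x : Fin n → ℝ, 0 ≤ x ⬝ᵥ St *ᵥ x := by
      intro x
      simpa using hSt.posSemidef.dotProduct_mulVec_nonneg x
    obtain ⟨u, hu⟩ : ∃ u, u = R *ᵥ v := ⟨_, rfl⟩
    have hu0 : u ≠ 0 := by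
      intro h
      apply hv
      apply hR
      rw [← hu, h, mulVec_zero]
    have ha : 0 < u ⬝ᵥ St *ᵥ u := by
      simpa using hSt.dotProduct_mulVec_pos hu0
    obtain ⟨w, hw⟩ : ∃ w, w = St⁻¹ *ᵥ (Eᵀ *ᵥ (Rᵀ *ᵥ (St *ᵥ u))) := ⟨_, rfl⟩
    have hSw : St *ᵥ w = Eᵀ *ᵥ (Rᵀ *ᵥ (St *ᵥ u)) := by
      rw [hw, mulVec_mulVec, mul_nonsing_inv _ hdet, one_mulVec]
    have hEw : E *ᵥ w = μ • v := by
      rw [← hev, hw, hu]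
      simp only [mulVec_mulVec, Matrix.mul_assoc]
    have hEu : E *ᵥ u = v := by
      rw [hu, mulVec_mulVec, hER, one_mulVec]
    have hx : ∀ x : Fin n → ℝ, x ⬝ᵥ St *ᵥ w = (R *ᵥ (E *ᵥ x)) ⬝ᵥ St *ᵥ u := by
      intro x
      rw [hSw, dotProduct_mulVec, vecMul_transpose, dotProduct_mulVec, vecMul_transpose]
    have h1 : w ⬝ᵥ St *ᵥ w = μ * (u ⬝ᵥ St *ᵥ u) := by
      rw [hx, hEw, mulVec_smul, ← hu, smul_dotProduct, smul_eq_mul]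
    have h2 : u ⬝ᵥ St *ᵥ w = u ⬝ᵥ St *ᵥ u := by
      rw [hx, hEu, ← hu]
    have h3 : w ⬝ᵥ St *ᵥ u = u ⬝ᵥ St *ᵥ u := by rw [comm, h2]
    have hz : (w - u) ⬝ᵥ St *ᵥ (w - u) = (μ - 1) * (u ⬝ᵥ St *ᵥ u) := by
      simp only [mulVec_sub, sub_dotProduct, dotProduct_sub, h1, h2, h3]
      ring
    have hPz : P *ᵥ (w - u) = w - μ • u := by
      rw [hP, sub_mulVec, one_mulVec, ← mulVec_mulVec, mulVec_sub, hEw, hEu, mulVec_sub,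
        mulVec_smul, ← hu]
      abel
    have hPP : (w - μ • u) ⬝ᵥ St *ᵥ (w - μ • u) = μ * (μ - 1) * (u ⬝ᵥ St *ᵥ u) := by
      simp only [mulVec_sub, mulVec_smul, sub_dotProduct, dotProduct_sub, smul_dotProduct,
        dotProduct_smul, smul_eq_mul, h1, h2, h3]
      ring
    have hb := hPbound (w - u)
    rw [hPz, hPP, hz] at hb
    have hn := nonneg (w - u)
    rw [hz] at hn
    have hμ : 1 ≤ μ := by
      have := nonneg_of_mul_nonneg_left hn ha
      linarith
    refine ⟨hμ, ?_⟩
    rcases hμ.eq_or_lt with h | h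
    · rw [← h]; exact hK
    · have hpos : 0 < (μ - 1) * (u ⬝ᵥ St *ᵥ u) := mul_pos (by linarith) ha
      refine le_of_mul_le_mul_right ?_ hpos
      rw [← mul_assoc]
      exact hb
  refine ⟨key, ?_⟩
  intro μ₁ μ₂ v₁ v₂ hv₁ hv₂ he₁ he₂
  obtain ⟨h1, -⟩ := key μ₁ v₁ hv₁ he₁
  obtain ⟨-, h2⟩ := key μ₂ v₂ hv₂ he₂
  rw [div_le_iff₀ (by linarith)]
  nlinarith
end

section
/- Let S̃ be a symmetric positive definite real n×n matrix, let R be a real n×m matrix of full column rank, and let E be a real m×n matrix with E R = I_m. Set P := I_n − R E. Then every eigenvalue μ ∈ ℝ of the preconditioned matrix (E S̃⁻¹ Eᵀ)(Rᵀ S̃ R) satisfies μ ≤ 1 + sup over nonzero w ∈ ℝⁿ of the Rayleigh quotient ((P w)ᵀ S̃ (P w)) / (wᵀ S̃ w); more precisely, μ ≤ max(1, sup_{w ≠ 0} ((P w)ᵀ S̃ (P w))/(wᵀ S̃ w)). -/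
open Matrix

theorem bddc_aux_pos {n : ℕ} (S : Matrix (Fin n) (Fin n) ℝ) (hS : S.PosDef)
    (w : Fin n → ℝ) (hw : w ≠ 0) : 0 < w ⬝ᵥ S.mulVec w := by
  simpa using hS.dotProduct_mulVec_pos hw

theorem bddc_aux_bdd {n : ℕ} (S P : Matrix (Fin n) (Fin n) ℝ) (hS : S.PosDef) :
    BddAbove (Set.range fun w : {w : Fin n → ℝ // w ≠ 0} =>
      (P.mulVec w.1 ⬝ᵥ S.mulVec (P.mulVec w.1)) / (w.1 ⬝ᵥ S.mulVec w.1)) := by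
  have hc : IsCompact (Metric.sphere (0 : Fin n → ℝ) 1) := isCompact_sphere _ _
  have hcont : ContinuousOn (fun w : Fin n → ℝ =>
      (P.mulVec w ⬝ᵥ S.mulVec (P.mulVec w)) / (w ⬝ᵥ S.mulVec w))
      (Metric.sphere (0 : Fin n → ℝ) 1) := by
    apply ContinuousOn.div
    · apply Continuous.continuousOn
      fun_prop
    · apply Continuous.continuousOn
      fun_prop
    · intro w hw
      refine (bddc_aux_pos S hS w ?_).ne'
      rintro rfl
      simp at hw
  obtain ⟨C, hC⟩ := hc.bddAbove_image hcont
  refine ⟨C, ?_⟩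
  rintro _ ⟨⟨w, hw⟩, rfl⟩
  have hn : ‖w‖ ≠ 0 := norm_ne_zero_iff.mpr hw
  have h := hC ⟨‖w‖⁻¹ • w, by simp [norm_smul, hn], rfl⟩
  have hp := (bddc_aux_pos S hS w hw).ne'
  simp only [mulVec_smul, smul_dotProduct, dotProduct_smul, smul_eq_mul] at h
  have hi : ‖w‖⁻¹ ≠ 0 := inv_ne_zero hn
  rwa [mul_div_mul_left _ _ hi, mul_div_mul_left _ _ hi] at h

/-- Eigenvalue bound via the Rayleigh quotient of the jump operator: every real
eigenvalue `μ` of `(E S̃⁻¹ Eᵀ)(Rᵀ S̃ R)` satisfies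
`μ ≤ max 1 (⨆_{w ≠ 0} ((P w)ᵀ S̃ (P w)) / (wᵀ S̃ w))` where `P := I - R E`. -/
theorem bddc_max_eigenvalue_rayleigh {n m : ℕ}
    (St : Matrix (Fin n) (Fin n) ℝ) (hSt : St.PosDef)
    (R : Matrix (Fin n) (Fin m) ℝ) (hR : Function.Injective R.mulVec)
    (E : Matrix (Fin m) (Fin n) ℝ) (hER : E * R = 1)
    (P : Matrix (Fin n) (Fin n) ℝ) (hP : P = 1 - R * E)
    (μ : ℝ) (v : Fin m → ℝ) (hv : v ≠ 0)
    (heig : ((E * St⁻¹ * Eᵀ) * (Rᵀ * St * R)).mulVec v = μ • v) :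
    μ ≤ max 1 (⨆ w : {w : Fin n → ℝ // w ≠ 0},
      (P.mulVec w.1 ⬝ᵥ St.mulVec (P.mulVec w.1)) / (w.1 ⬝ᵥ St.mulVec w.1)) := by
  by_contra hcon
  push Not at hcon
  obtain ⟨h1, h2⟩ := max_lt_iff.mp hcon
  set u := R.mulVec v with hu
  have hu0 : u ≠ 0 := by
    intro h
    exact hv (hR (by rw [← hu, h, mulVec_zero]))
  have hsymm : Stᵀ = St := by simpa using hSt.isHermitian.eq
  have hdet : IsUnit St.det := (Matrix.isUnit_iff_isUnit_det _).mp hSt.isUnit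
  set w := (St⁻¹ * Eᵀ * Rᵀ * St).mulVec u with hw
  have hEw : E.mulVec w = μ • v := by
    rw [← heig, hw, hu]
    simp only [mulVec_mulVec, Matrix.mul_assoc]
  have hEu : E.mulVec u = v := by
    rw [hu, mulVec_mulVec, hER, one_mulVec]
  have hSw : St.mulVec w = (Eᵀ * Rᵀ * St).mulVec u := by
    rw [hw, mulVec_mulVec]
    congr 1
    rw [Matrix.mul_assoc St⁻¹, Matrix.mul_assoc St⁻¹, Matrix.mul_nonsing_inv_cancel_left _ _ hdet]
  have hz : ∀ z, z ⬝ᵥ St.mulVec w = R.mulVec (E.mulVec z) ⬝ᵥ St.mulVec u := by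
    intro z
    rw [hSw, ← mulVec_mulVec, ← transpose_mul, mulVec_transpose,
      dotProduct_comm, ← dotProduct_mulVec, dotProduct_comm, mulVec_mulVec z R E]
  have hc : ∀ x y, x ⬝ᵥ St.mulVec y = y ⬝ᵥ St.mulVec x := by
    intro x y
    rw [dotProduct_mulVec, ← mulVec_transpose, hsymm, dotProduct_comm]
  have huu := bddc_aux_pos St hSt u hu0
  have huw : u ⬝ᵥ St.mulVec w = u ⬝ᵥ St.mulVec u := by rw [hz, hEu]
  have hwu : w ⬝ᵥ St.mulVec u = u ⬝ᵥ St.mulVec u := by rw [hc, huw]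
  have hww : w ⬝ᵥ St.mulVec w = μ * (u ⬝ᵥ St.mulVec u) := by
    rw [hz, hEw, mulVec_smul, smul_dotProduct, smul_eq_mul]
  have hPz : P.mulVec (w - u) = w - μ • u := by
    rw [hP, sub_mulVec, one_mulVec, ← mulVec_mulVec, mulVec_sub E, hEw, hEu, mulVec_sub,
      mulVec_smul, ← hu]
    abel
  have hzz : (w - u) ⬝ᵥ St.mulVec (w - u) = (μ - 1) * (u ⬝ᵥ St.mulVec u) := by
    simp only [mulVec_sub, sub_dotProduct, dotProduct_sub, huw, hwu, hww]
    ring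
  have hyy : (w - μ • u) ⬝ᵥ St.mulVec (w - μ • u) = μ * ((μ - 1) * (u ⬝ᵥ St.mulVec u)) := by
    simp only [mulVec_sub, mulVec_smul, sub_dotProduct, dotProduct_sub, smul_dotProduct,
      dotProduct_smul, smul_eq_mul, huw, hwu, hww]
    ring
  have hpos : 0 < (μ - 1) * (u ⬝ᵥ St.mulVec u) := mul_pos (by linarith) huu
  have hz0 : w - u ≠ 0 := by
    intro h
    rw [h] at hzz
    simp only [zero_dotProduct] at hzz
    linarith
  have h3 := le_ciSup (bddc_aux_bdd St P hSt) ⟨w - u, hz0⟩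
  simp only [hPz, hyy, hzz] at h3
  rw [mul_div_cancel_right₀ _ hpos.ne'] at h3
  linarith
end
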